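/- arXiv:0711.1402 — 2 statements merged into one kernel-verified Lean document; each statement's English description precedes it below -/
import Mathlib

section
/- Let k be a field and C a k-linear category in which every Hom-space Hom(X,Y) is a finite-dimensional k-vector space. Let 𝒥 be a finite set of objects of C, each of which is non-null (End(J) ≠ 0), such that for all objects X, Y the k-linear map Φ : ⊕_{J∈𝒥} Hom(X,J) ⊗_k Hom(J,Y) → Hom(X,Y), f⊗g ↦ g∘f, is bijective. Then: (1) every J ∈ 𝒥 is simple, i.e. every endomorphism of J is a k-multiple of the identity; (2) for every simple object X there exists J_X ∈ 𝒥 with X ≅ J_X, and Hom(X,J) = 0 = Hom(J,X) for every J ∈ 𝒥 that is not isomorphic to J_X; (3) any two simple objects X, Y of C are either isomorphic or satisfy Hom(X,Y) = 0. -/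
/-!
For a morphism `f : Jᵢ ⟶ Jⱼ` between members of the family, `Φ` sends both the element `𝟙 ⊗ f` of
the `i`-th summand and the element `f ⊗ 𝟙` of the `j`-th summand to `f`, so injectivity of `Φ`
identifies them. For `i ≠ j` they lie in different summands, so both vanish and `f = 0`. For
`i = j` the relation `𝟙 ⊗ f = f ⊗ 𝟙` says that `f` is a multiple of `𝟙`.

For a simple `X`, surjectivity of `Φ` at `(X, X)` gives a nonzero composite `X ⟶ Jᵢ ⟶ X`. As `X`
and `Jᵢ` both have only scalar endomorphisms, its two factors are isomorphisms.
-/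

open CategoryTheory
open scoped TensorProduct

/-- Composition in a `k`-linear category, as a bilinear map. -/
noncomputable def homComp (k : Type*) [Field k] {C : Type*} [Category C] [Preadditive C]
    [Linear k C] (X Y Z : C) : (X ⟶ Y) →ₗ[k] (Y ⟶ Z) →ₗ[k] (X ⟶ Z) :=
  LinearMap.mk₂ k (fun f g => f ≫ g)
    (fun _ _ _ => by simp)
    (fun _ _ _ => by simp)
    (fun _ _ _ => by simp)
    (fun _ _ _ => by simp)

/-- The canonical map `Φ : ⊕_{J∈𝒥} Hom(X,J) ⊗ Hom(J,Y) → Hom(X,Y)`, `f⊗g ↦ g∘f`. -/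
noncomputable def homDecomp (k : Type*) [Field k] {C : Type*} [Category C] [Preadditive C]
    [Linear k C] {J : Type*} [Fintype J] [DecidableEq J] (obj : J → C) (X Y : C) :
    ((j : J) → (X ⟶ obj j) ⊗[k] (obj j ⟶ Y)) →ₗ[k] (X ⟶ Y) :=
  LinearMap.lsum k (fun j : J => (X ⟶ obj j) ⊗[k] (obj j ⟶ Y)) k
    (fun j => TensorProduct.lift (homComp k X (obj j) Y))

section LinearAlgebra

variable {k V W : Type*} [Field k] [AddCommGroup V] [Module k V] [AddCommGroup W] [Module k W]

lemma exists_eq_smul_of_tmul_eq_tmul {v v' : V} {w w' : W} (hv : v ≠ 0)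
    (h : v ⊗ₜ[k] w = v' ⊗ₜ[k] w') : ∃ c : k, w = c • w' := by
  obtain ⟨φ, hφ⟩ := Module.Projective.exists_dual_eq_one k hv
  refine ⟨φ v', ?_⟩
  simpa [hφ] using congrArg (TensorProduct.lid k W ∘ φ.rTensor W) h

lemma eq_zero_of_tmul_eq_zero {v : V} {w : W} (hv : v ≠ 0) (h : v ⊗ₜ[k] w = 0) : w = 0 := by
  obtain ⟨c, hc⟩ := exists_eq_smul_of_tmul_eq_tmul (v' := v) (w' := 0) hv
    (h.trans (TensorProduct.tmul_zero W v).symm)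
  rw [hc, smul_zero]

end LinearAlgebra

section ZeroMorphisms

variable {C : Type*} [Category C] [Limits.HasZeroMorphisms C] {X X' Y Y' : C}

lemma id_ne_zero_of_hom_ne_zero {f : X ⟶ Y} (hf : f ≠ 0) : 𝟙 X ≠ 0 :=
  fun h => hf (((Limits.IsZero.iff_id_eq_zero X).2 h).eq_zero_of_src f)

lemma hom_eq_zero_of_iso (e : X ≅ X') (e' : Y ≅ Y') (h : ∀ f : X' ⟶ Y', f = 0) (f : X ⟶ Y) :
    f = 0 :=
  (e.homCongr e').injective ((h _).trans (h _).symm)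

end ZeroMorphisms

/-- The simple objects of a `k`-linear category in the sense `End X ≅ k`: every endomorphism is a
scalar, and `X` is non-null. Unlike `CategoryTheory.Simple`, it does not refer to subobjects. -/
def IsLinearSimple (k : Type*) [Field k] {C : Type*} [Category C] [Preadditive C] [Linear k C]
    (X : C) : Prop :=
  (∀ f : X ⟶ X, ∃ c : k, f = c • 𝟙 X) ∧ 𝟙 X ≠ 0

section LinearCategory

variable {k : Type*} [Field k] {C : Type*} [Category C] [Preadditive C] [Linear k C]

/-- With `f ≫ g = c • 𝟙` and `g ≫ f = d • 𝟙`, evaluating `f ≫ g ≫ f` in two ways gives `c = d`, so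
that `c⁻¹ • g` is inverse to `f`. -/
lemma isIso_of_comp_ne_zero {X Y : C} (hX : ∀ f : X ⟶ X, ∃ c : k, f = c • 𝟙 X)
    (hY : ∀ f : Y ⟶ Y, ∃ c : k, f = c • 𝟙 Y) {f : X ⟶ Y} {g : Y ⟶ X} (hfg : f ≫ g ≠ 0) :
    IsIso f := by
  obtain ⟨c, hc⟩ := hX (f ≫ g)
  obtain ⟨d, hd⟩ := hY (g ≫ f)
  have hc0 : c ≠ 0 := by
    rintro rfl
    exact hfg (by rw [hc, zero_smul])
  have hf : f ≠ 0 := by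
    rintro rfl
    exact hfg Limits.zero_comp
  have hcd : c • f = d • f := by
    calc c • f = (f ≫ g) ≫ f := by rw [hc, Linear.smul_comp, Category.id_comp]
      _ = f ≫ (g ≫ f) := Category.assoc _ _ _
      _ = d • f := by rw [hd, Linear.comp_smul, Category.comp_id]
  obtain rfl : c = d := smul_left_injective k hf hcd
  exact ⟨c⁻¹ • g, by rw [Linear.comp_smul, hc, inv_smul_smul₀ hc0],
    by rw [Linear.smul_comp, hd, inv_smul_smul₀ hc0]⟩

variable {J : Type*} [Fintype J] [DecidableEq J] {obj : J → C}

lemma homDecomp_single_tmul {X Y : C} (j : J) (f : X ⟶ obj j) (g : obj j ⟶ Y) :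
    homDecomp k obj X Y (Pi.single j (f ⊗ₜ[k] g)) = f ≫ g := by
  rw [homDecomp, LinearMap.lsum_piSingle, TensorProduct.lift.tmul, homComp, LinearMap.mk₂_apply]

lemma single_id_tmul_eq_single_tmul_id {i j : J}
    (hinj : Function.Injective (homDecomp k obj (obj i) (obj j))) (f : obj i ⟶ obj j) :
    (Pi.single i (𝟙 (obj i) ⊗ₜ[k] f) : (l : J) → (obj i ⟶ obj l) ⊗[k] (obj l ⟶ obj j)) =
      Pi.single j (f ⊗ₜ[k] 𝟙 (obj j)) := by
  apply hinj
  rw [homDecomp_single_tmul, homDecomp_single_tmul, Category.id_comp, Category.comp_id]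

lemma hom_eq_zero_of_injective_homDecomp {i j : J}
    (hinj : Function.Injective (homDecomp k obj (obj i) (obj j))) (hij : i ≠ j)
    (f : obj i ⟶ obj j) : f = 0 := by
  by_contra hf
  have htmul : 𝟙 (obj i) ⊗ₜ[k] f = 0 := by
    simpa [hij] using congrFun (single_id_tmul_eq_single_tmul_id hinj f) i
  exact hf (eq_zero_of_tmul_eq_zero (id_ne_zero_of_hom_ne_zero hf) htmul)

lemma isLinearSimple_of_injective_homDecomp {j : J}
    (hinj : Function.Injective (homDecomp k obj (obj j) (obj j))) (hone : 𝟙 (obj j) ≠ 0) :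
    IsLinearSimple k (obj j) :=
  ⟨fun f => exists_eq_smul_of_tmul_eq_tmul hone <|
    Pi.single_injective (M := fun l => (obj j ⟶ obj l) ⊗[k] (obj l ⟶ obj j)) j <|
      single_id_tmul_eq_single_tmul_id hinj f, hone⟩

lemma exists_comp_ne_zero_of_surjective_homDecomp {X : C}
    (hsurj : Function.Surjective (homDecomp k obj X X)) (hone : 𝟙 X ≠ 0) :
    ∃ (j : J) (f : X ⟶ obj j) (g : obj j ⟶ X), f ≫ g ≠ 0 := by
  by_contra! h
  have hzero : homDecomp k obj X X = 0 :=
    LinearMap.pi_ext' fun j => TensorProduct.ext' fun f g =>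
      (homDecomp_single_tmul j f g).trans (h j f g)
  obtain ⟨t, ht⟩ := hsurj (𝟙 X)
  exact hone (by rw [← ht, hzero, LinearMap.zero_apply])

lemma exists_iso_of_surjective_homDecomp {X : C} (hJ : ∀ j, IsLinearSimple k (obj j))
    (hsurj : Function.Surjective (homDecomp k obj X X)) (hX : IsLinearSimple k X) :
    ∃ j, Nonempty (X ≅ obj j) := by
  obtain ⟨j, f, g, hfg⟩ := exists_comp_ne_zero_of_surjective_homDecomp hsurj hX.2
  have := isIso_of_comp_ne_zero hX.1 (hJ j).1 hfg
  exact ⟨j, ⟨asIso f⟩⟩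

theorem semisimple_hom_decomposition_general (hnn : ∀ j : J, ∃ f : obj j ⟶ obj j, f ≠ 0)
    (hinj : ∀ i j : J, Function.Injective (homDecomp k obj (obj i) (obj j)))
    (hsurj : ∀ X : C, IsLinearSimple k X → Function.Surjective (homDecomp k obj X X)) :
    (∀ j : J, IsLinearSimple k (obj j)) ∧
    (∀ X : C, IsLinearSimple k X →
      ∃ j : J, Nonempty (X ≅ obj j) ∧
        ∀ j' : J, ¬ Nonempty (obj j' ≅ obj j) →
          (∀ f : X ⟶ obj j', f = 0) ∧ (∀ g : obj j' ⟶ X, g = 0)) ∧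
    (∀ X Y : C, IsLinearSimple k X → IsLinearSimple k Y →
      (Nonempty (X ≅ Y) ∨ ∀ f : X ⟶ Y, f = 0)) := by
  have hJ (j : J) : IsLinearSimple k (obj j) :=
    (hnn j).elim fun _ hf =>
      isLinearSimple_of_injective_homDecomp (hinj j j) (id_ne_zero_of_hom_ne_zero hf)
  have hiso (X : C) (hX : IsLinearSimple k X) : ∃ j, Nonempty (X ≅ obj j) :=
    exists_iso_of_surjective_homDecomp hJ (hsurj X hX) hX
  refine ⟨hJ, fun X hX => ?_, fun X Y hX hY => ?_⟩
  · obtain ⟨j, ⟨e⟩⟩ := hiso X hX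
    refine ⟨j, ⟨e⟩, fun j' hj' => ?_⟩
    have hne : j' ≠ j := fun h => hj' ⟨eqToIso (congrArg obj h)⟩
    exact ⟨hom_eq_zero_of_iso e (Iso.refl _)
        (hom_eq_zero_of_injective_homDecomp (hinj j j') hne.symm),
      hom_eq_zero_of_iso (Iso.refl _) e (hom_eq_zero_of_injective_homDecomp (hinj j' j) hne)⟩
  · obtain ⟨i, ⟨e⟩⟩ := hiso X hX
    obtain ⟨j, ⟨e'⟩⟩ := hiso Y hY
    obtain rfl | hij := eq_or_ne i j
    · exact Or.inl ⟨e ≪≫ e'.symm⟩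
    · exact Or.inr (hom_eq_zero_of_iso e e' (hom_eq_zero_of_injective_homDecomp (hinj i j) hij))

end LinearCategory

/-- Let `C` be a `k`-linear category with finite-dimensional
Hom-spaces and `𝒥` a finite set of non-null objects such that
`Φ : ⊕_{J∈𝒥} Hom(X,J) ⊗ Hom(J,Y) → Hom(X,Y)` is bijective for all `X`, `Y`.  Then
(1) every `J ∈ 𝒥` is simple; (2) every simple object `X` is isomorphic to some
`J_X ∈ 𝒥`, and `Hom(X,J) = 0 = Hom(J,X)` for every `J ∈ 𝒥` not isomorphic to `J_X`;
(3) two simple objects are isomorphic or have zero Hom-spaces between them. -/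
theorem semisimple_hom_decomposition
    (k : Type*) [Field k] {C : Type*} [Category C] [Preadditive C] [Linear k C]
    (hfd : ∀ X Y : C, FiniteDimensional k (X ⟶ Y))
    {J : Type*} [Fintype J] [DecidableEq J] (obj : J → C)
    (hnn : ∀ j : J, ∃ f : obj j ⟶ obj j, f ≠ 0)
    (hΦ : ∀ X Y : C, Function.Bijective (homDecomp k obj X Y)) :
    (∀ j : J, (∀ f : obj j ⟶ obj j, ∃ c : k, f = c • 𝟙 (obj j)) ∧ 𝟙 (obj j) ≠ 0) ∧
    (∀ X : C, ((∀ f : X ⟶ X, ∃ c : k, f = c • 𝟙 X) ∧ 𝟙 X ≠ 0) →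
      ∃ j : J, Nonempty (X ≅ obj j) ∧
        ∀ j' : J, ¬ Nonempty (obj j' ≅ obj j) →
          (∀ f : X ⟶ obj j', f = 0) ∧ (∀ g : obj j' ⟶ X, g = 0)) ∧
    (∀ X Y : C, ((∀ f : X ⟶ X, ∃ c : k, f = c • 𝟙 X) ∧ 𝟙 X ≠ 0) →
      ((∀ f : Y ⟶ Y, ∃ c : k, f = c • 𝟙 Y) ∧ 𝟙 Y ≠ 0) →
      (Nonempty (X ≅ Y) ∨ ∀ f : X ⟶ Y, f = 0)) :=
  semisimple_hom_decomposition_general hnn (fun i j => (hΦ (obj i) (obj j)).1) fun X _ => (hΦ X X).2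
end

section
/- Let (H, r) be a coquasitriangular weak Hopf algebra over a field k. Then for all x, y ∈ H: Σ r(x⁽¹⁾⊗y⁽¹⁾)·ε_t(y⁽²⁾)·ε_s(x⁽²⁾) = Σ ε_t(x⁽¹⁾)·ε_s(y⁽¹⁾)·r(x⁽²⁾⊗y⁽²⁾). -/
/-!
Everything takes place in the convolution algebra of linear maps `H ⊗ H → H`, where `r` acts as a
scalar-valued element. Let `θ = ε_t * ε_s`, that is `θ(h) = Σ ε_t(h⁽¹⁾) ε_s(h⁽²⁾)`. Axiom (WBA2)
computes `θ` on products: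
`Σ ε_t(x⁽¹⁾) ε_s(y⁽¹⁾) ε(x⁽²⁾y⁽²⁾) = θ(xy)` and `Σ ε(y⁽¹⁾x⁽¹⁾) ε_t(y⁽²⁾) ε_s(x⁽²⁾) = θ(yx)`.
By (r1) the two factors `ε` on the left-hand sides are absorbed by `r`, so the two sides of the
exchange identity are `θ` applied to the two sides of (r3).
-/

open scoped TensorProduct
open TensorProduct LinearMap

/-- A weak bialgebra over a field `k`: an algebra and coalgebra subject to the
weak compatibility axioms (WBA1)-(WBA3). -/
class WeakBialgebra (k H : Type*) [Field k] [Ring H] [Algebra k H]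
    extends Coalgebra k H where
  /-- (WBA1): `Δ(xy) = Δ(x)Δ(y)`. -/
  comul_mul : ∀ x y : H,
    Coalgebra.comul (R := k) (x * y) = Coalgebra.comul (R := k) x * Coalgebra.comul (R := k) y
  /-- (WBA2): `ε(xyz) = Σ ε(xy⁽¹⁾)ε(y⁽²⁾z)`. -/
  counit_mul_mul : ∀ x y z : H,
    Coalgebra.counit (R := k) (x * y * z) =
      TensorProduct.lid k k
        ((TensorProduct.map (Coalgebra.counit ∘ₗ LinearMap.mulLeft k x)
            (Coalgebra.counit ∘ₗ LinearMap.mulRight k z))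
          (Coalgebra.comul (R := k) y))
  /-- (WBA2'): `ε(xyz) = Σ ε(xy⁽²⁾)ε(y⁽¹⁾z)`. -/
  counit_mul_mul' : ∀ x y z : H,
    Coalgebra.counit (R := k) (x * y * z) =
      TensorProduct.lid k k
        ((TensorProduct.map (Coalgebra.counit ∘ₗ LinearMap.mulRight k z)
            (Coalgebra.counit ∘ₗ LinearMap.mulLeft k x))
          (Coalgebra.comul (R := k) y))
  /-- (WBA3): `((Δ⊗id)∘Δ)(1) = (Δ(1)⊗1)·(1⊗Δ(1))`. -/
  comul_comul_one :
    (TensorProduct.map (Coalgebra.comul (R := k)) (LinearMap.id (M := H)))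
        (Coalgebra.comul (R := k) (1 : H)) =
      (Coalgebra.comul (R := k) (1 : H) ⊗ₜ[k] (1 : H)) *
        ((TensorProduct.assoc k H H H).symm ((1 : H) ⊗ₜ[k] Coalgebra.comul (R := k) (1 : H)))
  /-- (WBA3'): `((Δ⊗id)∘Δ)(1) = (1⊗Δ(1))·(Δ(1)⊗1)`. -/
  comul_comul_one' :
    (TensorProduct.map (Coalgebra.comul (R := k)) (LinearMap.id (M := H)))
        (Coalgebra.comul (R := k) (1 : H)) =
      ((TensorProduct.assoc k H H H).symm ((1 : H) ⊗ₜ[k] Coalgebra.comul (R := k) (1 : H))) *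
        (Coalgebra.comul (R := k) (1 : H) ⊗ₜ[k] (1 : H))

variable (k H : Type*) [Field k] [Ring H] [Algebra k H]

/-- The target counital map `ε_t(x) = Σ ε(1⁽¹⁾x)·1⁽²⁾`. -/
noncomputable def εt [WeakBialgebra k H] : H →ₗ[k] H :=
  (TensorProduct.lid k H).toLinearMap ∘ₗ
    (LinearMap.rTensor H (Coalgebra.counit (R := k) (A := H))) ∘ₗ
    (LinearMap.mulLeft k (Coalgebra.comul (R := k) (1 : H))) ∘ₗ
    ((TensorProduct.mk k H H).flip 1)

/-- The source counital map `ε_s(x) = Σ 1⁽¹⁾·ε(x1⁽²⁾)`. -/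
noncomputable def εs [WeakBialgebra k H] : H →ₗ[k] H :=
  (TensorProduct.rid k H).toLinearMap ∘ₗ
    (LinearMap.lTensor H (Coalgebra.counit (R := k) (A := H))) ∘ₗ
    (LinearMap.mulRight k (Coalgebra.comul (R := k) (1 : H))) ∘ₗ
    (TensorProduct.mk k H H 1)

/-- The target base algebra `H_t = ε_t(H)`. -/
noncomputable def Ht [WeakBialgebra k H] : Submodule k H := LinearMap.range (εt k H)

/-- The source base algebra `H_s = ε_s(H)`. -/
noncomputable def Hs [WeakBialgebra k H] : Submodule k H := LinearMap.range (εs k H)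

/-- A weak Hopf algebra: a weak bialgebra with an antipode `S` satisfying
`Σ x⁽¹⁾S(x⁽²⁾) = ε_t(x)`, `Σ S(x⁽¹⁾)x⁽²⁾ = ε_s(x)` and `Σ S(x⁽¹⁾)x⁽²⁾S(x⁽³⁾) = S(x)`. -/
class WeakHopfAlgebra extends WeakBialgebra k H where
  antipode : H →ₗ[k] H
  mul_antipode : ∀ x : H,
    LinearMap.mul' k H ((LinearMap.lTensor H antipode) (Coalgebra.comul (R := k) x)) = εt k H x
  antipode_mul : ∀ x : H,
    LinearMap.mul' k H ((LinearMap.rTensor H antipode) (Coalgebra.comul (R := k) x)) = εs k H x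
  antipode_mul_antipode : ∀ x : H,
    LinearMap.mul' k H
      ((TensorProduct.map antipode (LinearMap.mul' k H ∘ₗ LinearMap.lTensor H antipode))
        ((LinearMap.lTensor H (Coalgebra.comul (R := k)))
          (Coalgebra.comul (R := k) x))) = antipode x

/-- The antipode of a weak Hopf algebra, as a linear map. -/
noncomputable def aS [WeakHopfAlgebra k H] : H →ₗ[k] H :=
  WeakHopfAlgebra.antipode (k := k) (H := H)

/-- A coquasitriangular weak Hopf algebra: a weak Hopf algebra with a universal
`r`-form `r : H ⊗ H → k` (with weak convolution inverse `r̄`) satisfying the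
axioms (r1)–(r5). -/
class CoquasitriangularWHA extends WeakHopfAlgebra k H where
  rform : H ⊗[k] H →ₗ[k] k
  rbar : H ⊗[k] H →ₗ[k] k
  /-- (r1): `r(x⊗y) = Σ ε(x⁽¹⁾y⁽¹⁾)r(x⁽²⁾⊗y⁽²⁾)`. -/
  rform_eq₁ : ∀ x y : H,
    rform (x ⊗ₜ[k] y) =
      TensorProduct.lid k k
        ((TensorProduct.map ((Coalgebra.counit (R := k) (A := H)) ∘ₗ LinearMap.mul' k H) rform)
          ((TensorProduct.tensorTensorTensorComm k H H H H)
            (Coalgebra.comul (R := k) x ⊗ₜ[k] Coalgebra.comul (R := k) y)))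
  /-- (r1'): `r(x⊗y) = Σ r(x⁽¹⁾⊗y⁽¹⁾)ε(y⁽²⁾x⁽²⁾)`. -/
  rform_eq₂ : ∀ x y : H,
    rform (x ⊗ₜ[k] y) =
      TensorProduct.lid k k
        ((TensorProduct.map rform
            ((Coalgebra.counit (R := k) (A := H)) ∘ₗ LinearMap.mul' k H ∘ₗ
              (TensorProduct.comm k H H).toLinearMap))
          ((TensorProduct.tensorTensorTensorComm k H H H H)
            (Coalgebra.comul (R := k) x ⊗ₜ[k] Coalgebra.comul (R := k) y)))
  /-- (r2): `Σ r̄(x⁽¹⁾⊗y⁽¹⁾)r(x⁽²⁾⊗y⁽²⁾) = ε(yx)`. -/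
  rbar_rform : ∀ x y : H,
    TensorProduct.lid k k
        ((TensorProduct.map rbar rform)
          ((TensorProduct.tensorTensorTensorComm k H H H H)
            (Coalgebra.comul (R := k) x ⊗ₜ[k] Coalgebra.comul (R := k) y))) =
      Coalgebra.counit (R := k) (y * x)
  /-- (r2'): `Σ r(x⁽¹⁾⊗y⁽¹⁾)r̄(x⁽²⁾⊗y⁽²⁾) = ε(xy)`. -/
  rform_rbar : ∀ x y : H,
    TensorProduct.lid k k
        ((TensorProduct.map rform rbar)
          ((TensorProduct.tensorTensorTensorComm k H H H H)
            (Coalgebra.comul (R := k) x ⊗ₜ[k] Coalgebra.comul (R := k) y))) =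
      Coalgebra.counit (R := k) (x * y)
  /-- (r3): `Σ x⁽¹⁾y⁽¹⁾ r(x⁽²⁾⊗y⁽²⁾) = Σ r(x⁽¹⁾⊗y⁽¹⁾) y⁽²⁾x⁽²⁾`. -/
  almost_comm : ∀ x y : H,
    TensorProduct.rid k H
        ((TensorProduct.map (LinearMap.mul' k H) rform)
          ((TensorProduct.tensorTensorTensorComm k H H H H)
            (Coalgebra.comul (R := k) x ⊗ₜ[k] Coalgebra.comul (R := k) y))) =
      TensorProduct.lid k H
        ((TensorProduct.map rform
            (LinearMap.mul' k H ∘ₗ (TensorProduct.comm k H H).toLinearMap))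
          ((TensorProduct.tensorTensorTensorComm k H H H H)
            (Coalgebra.comul (R := k) x ⊗ₜ[k] Coalgebra.comul (R := k) y)))
  /-- (r4): `r(xy⊗z) = Σ r(y⊗z⁽¹⁾)r(x⊗z⁽²⁾)`. -/
  rform_mul_left : ∀ x y z : H,
    rform ((x * y) ⊗ₜ[k] z) =
      TensorProduct.lid k k
        ((TensorProduct.map (rform ∘ₗ TensorProduct.mk k H H y)
            (rform ∘ₗ TensorProduct.mk k H H x)) (Coalgebra.comul (R := k) z))
  /-- (r5): `r(x⊗yz) = Σ r(x⁽¹⁾⊗y)r(x⁽²⁾⊗z)`. -/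
  rform_mul_right : ∀ x y z : H,
    rform (x ⊗ₜ[k] (y * z)) =
      TensorProduct.lid k k
        ((TensorProduct.map (rform ∘ₗ (TensorProduct.mk k H H).flip y)
            (rform ∘ₗ (TensorProduct.mk k H H).flip z)) (Coalgebra.comul (R := k) x))

/-- The universal `r`-form, as a linear map. -/
noncomputable def rf [CoquasitriangularWHA k H] : H ⊗[k] H →ₗ[k] k :=
  CoquasitriangularWHA.rform (k := k) (H := H)

section Convolution

open Coalgebra WithConv

variable {R A B C D : Type*} [CommSemiring R] [Semiring A] [Algebra R A] [Semiring B] [Algebra R B]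
  [AddCommMonoid C] [Module R C] [AddCommMonoid D] [Module R D]

/-- The image of a functional on a coalgebra `C` in the convolution algebra of linear maps `C → A`.
It turns the action of functionals on `A`-valued maps into multiplication in that algebra. -/
noncomputable def algebraMapConv (A : Type*) [Semiring A] [Algebra R A]
    (f : WithConv (C →ₗ[R] R)) : WithConv (C →ₗ[R] A) :=
  toConv ((Algebra.ofId R A).toLinearMap ∘ₗ f.ofConv)

lemma algebraMapConv_apply (f : WithConv (C →ₗ[R] R)) (c : C) :
    algebraMapConv A f c = algebraMap R A (f c) := rfl

variable [CoalgebraStruct R C] [CoalgebraStruct R D]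

lemma algebraMapConv_mul (f g : WithConv (C →ₗ[R] R)) :
    algebraMapConv A (f * g) = algebraMapConv A f * algebraMapConv A g :=
  congrArg toConv (algHom_comp_convMul_distrib (Algebra.ofId R A) f g)

lemma algebraMapConv_convMul_apply (f : WithConv (C →ₗ[R] R)) (g : WithConv (C →ₗ[R] A)) (c : C) :
    (algebraMapConv A f * g) c =
      TensorProduct.lid R A (TensorProduct.map f.ofConv g.ofConv (comul c)) := by
  rw [(ℛ R c).convMul_apply, ← (ℛ R c).eq]
  simp [algebraMapConv_apply, Algebra.smul_def]

lemma convMul_algebraMapConv_apply (g : WithConv (C →ₗ[R] A)) (f : WithConv (C →ₗ[R] R)) (c : C) :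
    (g * algebraMapConv A f) c =
      TensorProduct.rid R A (TensorProduct.map g.ofConv f.ofConv (comul c)) := by
  rw [(ℛ R c).convMul_apply, ← (ℛ R c).eq]
  simp [algebraMapConv_apply, Algebra.smul_def, Algebra.commutes]

lemma comp_algebraMapConv_convMul (φ : A →ₗ[R] B) (f : WithConv (C →ₗ[R] R))
    (g : WithConv (C →ₗ[R] A)) :
    toConv (φ ∘ₗ (algebraMapConv A f * g).ofConv) =
      algebraMapConv B f * toConv (φ ∘ₗ g.ofConv) := by
  ext c
  simp [(ℛ R c).convMul_apply, algebraMapConv_apply, ← Algebra.smul_def]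

lemma comp_convMul_algebraMapConv (φ : A →ₗ[R] B) (g : WithConv (C →ₗ[R] A))
    (f : WithConv (C →ₗ[R] R)) :
    toConv (φ ∘ₗ (g * algebraMapConv A f).ofConv) =
      toConv (φ ∘ₗ g.ofConv) * algebraMapConv B f := by
  ext c
  simp [(ℛ R c).convMul_apply, algebraMapConv_apply, ← Algebra.commutes, ← Algebra.smul_def]

lemma convMul_tmul_apply (f g : WithConv (C ⊗[R] D →ₗ[R] A)) {x : C} {y : D} {ι κ : Type*}
    (𝓧 : Repr R x ι) (𝓨 : Repr R y κ) :
    (f * g) (x ⊗ₜ[R] y) = ∑ i ∈ 𝓧.index, ∑ j ∈ 𝓨.index,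
      f (𝓧.left i ⊗ₜ[R] 𝓨.left j) * g (𝓧.right i ⊗ₜ[R] 𝓨.right j) := by
  rw [convMul_apply, TensorProduct.comul_tmul, ← 𝓧.eq, ← 𝓨.eq]
  simp [TensorProduct.sum_tmul, TensorProduct.tmul_sum, Finset.sum_comm (s := 𝓨.index)]

end Convolution

section ExchangeIdentity

open Coalgebra WithConv

variable {k H}

local notation "ε" => counit (R := k) (A := H)
local notation "σ" => LinearEquiv.toLinearMap (TensorProduct.comm k H H)

namespace WeakBialgebra

variable [WeakBialgebra k H] {x y : H} {ι κ : Type*}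

lemma counit_mul_mul_eq_sum (a b : H) (𝓨 : Repr k y ι) :
    ε (a * y * b) = ∑ i ∈ 𝓨.index, ε (a * 𝓨.left i) * ε (𝓨.right i * b) := by
  rw [counit_mul_mul, ← 𝓨.eq]
  simp

lemma counit_mul_mul_eq_sum' (a b : H) (𝓨 : Repr k y ι) :
    ε (a * y * b) = ∑ i ∈ 𝓨.index, ε (a * 𝓨.right i) * ε (𝓨.left i * b) := by
  rw [counit_mul_mul', ← 𝓨.eq]
  simp [mul_comm]

lemma εt_eq_sum (𝓤 : Repr k (1 : H) κ) (x : H) :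
    εt k H x = ∑ i ∈ 𝓤.index, ε (𝓤.left i * x) • 𝓤.right i := by
  simp [εt, ← 𝓤.eq, Finset.sum_mul]

lemma εs_eq_sum (𝓤 : Repr k (1 : H) κ) (x : H) :
    εs k H x = ∑ i ∈ 𝓤.index, ε (x * 𝓤.right i) • 𝓤.left i := by
  simp [εs, ← 𝓤.eq, Finset.mul_sum]

lemma εt_mul (𝓧 : Repr k x ι) (y : H) :
    εt k H (x * y) = ∑ i ∈ 𝓧.index, ε (𝓧.right i * y) • εt k H (𝓧.left i) := by
  simp_rw [εt_eq_sum (ℛ k 1), ← mul_assoc, counit_mul_mul_eq_sum _ y 𝓧, Finset.sum_smul,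
    Finset.smul_sum, smul_smul, mul_comm (ε (𝓧.right _ * y))]
  exact Finset.sum_comm

lemma εt_mul' (𝓧 : Repr k x ι) (y : H) :
    εt k H (x * y) = ∑ i ∈ 𝓧.index, ε (𝓧.left i * y) • εt k H (𝓧.right i) := by
  simp_rw [εt_eq_sum (ℛ k 1), ← mul_assoc, counit_mul_mul_eq_sum' _ y 𝓧, Finset.sum_smul,
    Finset.smul_sum, smul_smul, mul_comm (ε (𝓧.left _ * y))]
  exact Finset.sum_comm

lemma εt_mul_εs_eq_sum (𝓤 : Repr k (1 : H) κ) (x y : H) :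
    εt k H x * εs k H y = ∑ i ∈ 𝓤.index, ∑ j ∈ 𝓤.index,
      (ε (𝓤.left i * x) * ε (y * 𝓤.right j)) • (𝓤.right i * 𝓤.left j) := by
  simp_rw [εt_eq_sum 𝓤, εs_eq_sum 𝓤, Finset.sum_mul_sum, smul_mul_smul_comm]

variable (k H) in
/-- The convolution product `θ(h) = Σ ε_t(h⁽¹⁾) ε_s(h⁽²⁾)` of the two counital maps. -/
noncomputable def counitalConv : H →ₗ[k] H := (toConv (εt k H) * toConv (εs k H)).ofConv

lemma counitalConv_eq_sum (𝓤 : Repr k (1 : H) κ) (h : H) :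
    counitalConv k H h = ∑ i ∈ 𝓤.index, ∑ j ∈ 𝓤.index,
      ε (𝓤.left i * h * 𝓤.right j) • (𝓤.right i * 𝓤.left j) := by
  refine ((ℛ k h).convMul_apply (toConv (εt k H)) (toConv (εs k H))).trans ?_
  simp_rw [εt_mul_εs_eq_sum 𝓤, counit_mul_mul_eq_sum _ _ (ℛ k h), Finset.sum_smul]
  rw [Finset.sum_comm]
  exact Finset.sum_congr rfl fun _ _ => Finset.sum_comm

lemma counitalConv_mul (x : H) (𝓨 : Repr k y ι) :
    counitalConv k H (x * y) = ∑ j ∈ 𝓨.index, εt k H (x * 𝓨.left j) * εs k H (𝓨.right j) := by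
  simp_rw [counitalConv_eq_sum (ℛ k 1), εt_mul_εs_eq_sum (ℛ k 1), ← mul_assoc,
    counit_mul_mul_eq_sum _ _ 𝓨, Finset.sum_smul]
  rw [Finset.sum_comm (s := 𝓨.index)]
  exact Finset.sum_congr rfl fun _ _ => Finset.sum_comm

lemma counitalConv_mul' (x : H) (𝓨 : Repr k y ι) :
    counitalConv k H (x * y) = ∑ j ∈ 𝓨.index, εt k H (x * 𝓨.right j) * εs k H (𝓨.left j) := by
  simp_rw [counitalConv_eq_sum (ℛ k 1), εt_mul_εs_eq_sum (ℛ k 1), ← mul_assoc,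
    counit_mul_mul_eq_sum' _ _ 𝓨, Finset.sum_smul]
  rw [Finset.sum_comm (s := 𝓨.index)]
  exact Finset.sum_congr rfl fun _ _ => Finset.sum_comm

lemma counital_convMul_counit_mul :
    toConv (mul' k H ∘ₗ TensorProduct.map (εt k H) (εs k H)) *
        algebraMapConv H (toConv (ε ∘ₗ mul' k H)) =
      toConv (counitalConv k H ∘ₗ mul' k H) := by
  ext x y
  suffices _ = counitalConv k H (x * y) from this
  rw [counitalConv_mul' x (ℛ k y)]
  simp [convMul_tmul_apply _ _ (ℛ k x) (ℛ k y), algebraMapConv_apply, εt_mul (ℛ k x),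
    Finset.sum_mul, ← Algebra.commutes, ← Algebra.smul_def, Finset.sum_comm (s := (ℛ k x).index)]

lemma counit_mul_swap_convMul_counital_swap :
    algebraMapConv H (toConv (ε ∘ₗ mul' k H ∘ₗ σ)) *
        toConv (mul' k H ∘ₗ TensorProduct.map (εt k H) (εs k H) ∘ₗ σ) =
      toConv (counitalConv k H ∘ₗ mul' k H ∘ₗ σ) := by
  ext x y
  suffices _ = counitalConv k H (y * x) from this
  rw [counitalConv_mul y (ℛ k x)]
  simp [convMul_tmul_apply _ _ (ℛ k x) (ℛ k y), algebraMapConv_apply, εt_mul' (ℛ k y),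
    Finset.sum_mul, ← Algebra.smul_def]

end WeakBialgebra

open WeakBialgebra in
theorem rform_counital_exchange_general [WeakBialgebra k H] (r : WithConv (H ⊗[k] H →ₗ[k] k))
    (counit_convMul : toConv (ε ∘ₗ mul' k H) * r = r)
    (convMul_counit : r * toConv (ε ∘ₗ mul' k H ∘ₗ σ) = r)
    (almost_comm : algebraMapConv H r * toConv (mul' k H ∘ₗ σ) =
      toConv (mul' k H) * algebraMapConv H r) :
    algebraMapConv H r * toConv (mul' k H ∘ₗ TensorProduct.map (εt k H) (εs k H) ∘ₗ σ) =
      toConv (mul' k H ∘ₗ TensorProduct.map (εt k H) (εs k H)) * algebraMapConv H r := by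
  set θ := counitalConv k H
  calc
    _ = algebraMapConv H r * (algebraMapConv H (toConv (ε ∘ₗ mul' k H ∘ₗ σ)) *
          toConv (mul' k H ∘ₗ TensorProduct.map (εt k H) (εs k H) ∘ₗ σ)) := by
      rw [← mul_assoc, ← algebraMapConv_mul, convMul_counit]
    _ = algebraMapConv H r * toConv (θ ∘ₗ mul' k H ∘ₗ σ) := by
      rw [counit_mul_swap_convMul_counital_swap]
    _ = toConv (θ ∘ₗ (algebraMapConv H r * toConv (mul' k H ∘ₗ σ)).ofConv) :=
      (comp_algebraMapConv_convMul ..).symm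
    _ = toConv (θ ∘ₗ (toConv (mul' k H) * algebraMapConv H r).ofConv) := by rw [almost_comm]
    _ = toConv (θ ∘ₗ mul' k H) * algebraMapConv H r := comp_convMul_algebraMapConv ..
    _ = toConv (mul' k H ∘ₗ TensorProduct.map (εt k H) (εs k H)) *
          (algebraMapConv H (toConv (ε ∘ₗ mul' k H)) * algebraMapConv H r) := by
      rw [← mul_assoc, counital_convMul_counit_mul]
    _ = _ := by rw [← algebraMapConv_mul, counit_convMul]

namespace CoquasitriangularWHA

variable [CoquasitriangularWHA k H]

lemma counit_mul_convMul_rf : toConv (ε ∘ₗ mul' k H) * toConv (rf k H) = toConv (rf k H) := by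
  ext x y
  exact (rform_eq₁ x y).symm

lemma rf_convMul_counit_mul_swap :
    toConv (rf k H) * toConv (ε ∘ₗ mul' k H ∘ₗ σ) = toConv (rf k H) := by
  ext x y
  exact (rform_eq₂ x y).symm

lemma rf_convMul_mul_swap :
    algebraMapConv H (toConv (rf k H)) * toConv (mul' k H ∘ₗ σ) =
      toConv (mul' k H) * algebraMapConv H (toConv (rf k H)) := by
  ext x y
  suffices (algebraMapConv H (toConv (rf k H)) * toConv (mul' k H ∘ₗ σ)) (x ⊗ₜ[k] y) =
      (toConv (mul' k H) * algebraMapConv H (toConv (rf k H))) (x ⊗ₜ[k] y) from this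
  rw [algebraMapConv_convMul_apply, convMul_algebraMapConv_apply]
  exact (almost_comm x y).symm

end CoquasitriangularWHA

end ExchangeIdentity

open WithConv CoquasitriangularWHA in
/-- In a coquasitriangular weak Hopf algebra over a field,
`Σ r(x⁽¹⁾⊗y⁽¹⁾)·ε_t(y⁽²⁾)·ε_s(x⁽²⁾) = Σ ε_t(x⁽¹⁾)·ε_s(y⁽¹⁾)·r(x⁽²⁾⊗y⁽²⁾)`
for all `x, y ∈ H`. -/
theorem rform_counital_exchange [CoquasitriangularWHA k H] :
    ∀ x y : H,
      TensorProduct.lid k H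
        ((TensorProduct.map (rf k H)
            (LinearMap.mul' k H ∘ₗ (TensorProduct.map (εt k H) (εs k H)) ∘ₗ
              (TensorProduct.comm k H H).toLinearMap))
          ((TensorProduct.tensorTensorTensorComm k H H H H)
            (Coalgebra.comul (R := k) x ⊗ₜ[k] Coalgebra.comul (R := k) y))) =
      TensorProduct.rid k H
        ((TensorProduct.map (LinearMap.mul' k H ∘ₗ TensorProduct.map (εt k H) (εs k H))
            (rf k H))
          ((TensorProduct.tensorTensorTensorComm k H H H H)
            (Coalgebra.comul (R := k) x ⊗ₜ[k] Coalgebra.comul (R := k) y))) := by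
  intro x y
  have h := congrArg (fun f => f.ofConv (x ⊗ₜ[k] y)) (rform_counital_exchange_general
    (toConv (rf k H)) counit_mul_convMul_rf rf_convMul_counit_mul_swap rf_convMul_mul_swap)
  exact (algebraMapConv_convMul_apply ..).symm.trans (h.trans (convMul_algebraMapConv_apply ..))
end
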